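/- FedSplit convergence with general per-round residuals: Let f_j : R^d -> R be l_j-strongly convex and L_j-smooth for j = 1,...,m; set l* = min_j l_j, L* = max_j L_j, kappa = L*/l*, and s = 1/sqrt(l* L*). Let z^{(t)} in (R^d)^m be the iterates of FedSplit with approximate proximal solvers, and define the residual r^{(t)} = prox_tilde(2*zbar^{(t)} - z^{(t)}) - prox_{s F}(2*zbar^{(t)} - z^{(t)}), where 2*zbar^{(t)} - z^{(t)} has j-th block 2*zbar^{(t)} - z_j^{(t)}, prox_{s F} acts blockwise as (prox_{s f_1}, ..., prox_{s f_m}), and prox_tilde acts blockwise with the approximate solvers. Then the exact FedSplit iteration has a unique fixed point z* in (R^d)^m, and for all t >= 1, ||z^{(t+1)} - z*|| <= rho^t * ||z^{(1)} - z*|| + 2 * sum_{j=1}^t rho^{t-j} * ||r^{(j)}||, where rho = 1 - 2/(sqrt(kappa)+1). -/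

import Mathlib

open Filter Finset RealInnerProductSpace

/-!
The exact iteration is a composition of two reflections. Reflection across the consensus subspace
is a linear isometry. Blockwise, `w = p + s ∇f(p)` at `p = prox_{sf}(w)`, so `2 prox_{sf} - id`
sends `p + s ∇f(p)` to `p - s ∇f(p)`; by the interpolation inequality for strongly convex smooth
functions and the choice `s = 1/√(lL)`, this map contracts distances by `ρ`. The Banach fixed point
theorem then gives `z*`. A residual `r` displaces one step by `2r`, and the discrete Grönwall
inequality accumulates these displacements.
-/

section QuadraticBounds

variable {E : Type*} [NormedAddCommGroup E] [InnerProductSpace ℝ E]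

/-- Comparing the two bounds at `x - t (g x - g y)` and symmetrizing in `x` and `y` gives a
nonnegative quadratic polynomial in `t`; the claim is the sign of its discriminant. -/
theorem norm_sub_sq_le_mul_inner_of_quadratic_bounds {f : E → ℝ} {g : E → E} {c : ℝ}
    (hlower : ∀ x y, f x + ⟪g x, y - x⟫ ≤ f y)
    (hupper : ∀ x y, f y ≤ f x + ⟪g x, y - x⟫ + c / 2 * ‖y - x‖ ^ 2) (x y : E) :
    ‖g x - g y‖ ^ 2 ≤ c * ⟪g x - g y, x - y⟫ := by
  have hline (x y : E) (t : ℝ) :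
      0 ≤ f x - f y - ⟪g y, x - y⟫ - t * ‖g x - g y‖ ^ 2 + c / 2 * t ^ 2 * ‖g x - g y‖ ^ 2 := by
    have hcompare := (hlower y (x - t • (g x - g y))).trans (hupper x _)
    rw [sub_sub_cancel_left, sub_right_comm x, norm_neg, norm_smul, mul_pow, Real.norm_eq_abs,
      sq_abs, inner_neg_right, inner_sub_right, inner_smul_right, inner_smul_right] at hcompare
    have hsq : ⟪g x, g x - g y⟫ - ⟪g y, g x - g y⟫ = ‖g x - g y‖ ^ 2 := by
      rw [← inner_sub_left, real_inner_self_eq_norm_sq]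
    linear_combination hcompare - t * hsq
  have hquadratic (t : ℝ) :
      0 ≤ c * ‖g x - g y‖ ^ 2 * (t * t) + -2 * ‖g x - g y‖ ^ 2 * t + ⟪g x - g y, x - y⟫ := by
    have hxy := hline x y t
    have hyx := hline y x t
    rw [norm_sub_rev (g y), ← neg_sub x y, inner_neg_right] at hyx
    rw [inner_sub_left]
    linear_combination hxy + hyx
  rcases eq_or_ne (g x - g y) 0 with h | h
  · simp [h]
  · have hdiscrim := discrim_le_zero hquadratic
    rw [discrim] at hdiscrim
    have hpos : 0 < ‖g x - g y‖ ^ 2 := by positivity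
    refine le_of_mul_le_mul_left ?_ hpos
    linear_combination hdiscrim / 4

end QuadraticBounds

section Moduli

variable {E : Type*} [NormedAddCommGroup E] [InnerProductSpace ℝ E] [CompleteSpace E]
  {f : E → ℝ} {l l' L L' : ℝ}

/-- `l`-strong convexity of a differentiable function, in its first-order form. -/
def IsStronglyConvex (l : ℝ) (f : E → ℝ) : Prop :=
  ∀ x y, f x + ⟪gradient f x, y - x⟫ + l / 2 * ‖y - x‖ ^ 2 ≤ f y

/-- `L`-smoothness: `f` is differentiable with `L`-Lipschitz gradient. The constant is a real
number, so that it can be multiplied with a modulus of strong convexity. -/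
def IsSmooth (L : ℝ) (f : E → ℝ) : Prop :=
  Differentiable ℝ f ∧ ∀ x y, ‖gradient f x - gradient f y‖ ≤ L * ‖x - y‖

theorem IsStronglyConvex.mono (hl : l' ≤ l) (hf : IsStronglyConvex l f) :
    IsStronglyConvex l' f := fun x y ↦ (hf x y).trans' (by gcongr)

theorem IsSmooth.mono (hL : L ≤ L') (hf : IsSmooth L f) : IsSmooth L' f :=
  ⟨hf.1, fun x y ↦ (hf.2 x y).trans (by gcongr)⟩

theorem IsSmooth.hasDerivAt_comp_line_sub_quadratic (hf : IsSmooth L f) (x v : E) (t : ℝ) :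
    HasDerivAt (fun t : ℝ ↦ f (x + t • v) - t * ⟪gradient f x, v⟫ - t ^ 2 * (L / 2 * ‖v‖ ^ 2))
      (⟪gradient f (x + t • v) - gradient f x, v⟫ - t * (L * ‖v‖ ^ 2)) t := by
  have hline : HasDerivAt (fun t : ℝ ↦ x + t • v) v t := by
    simpa using ((hasDerivAt_id t).smul_const v).const_add x
  have hcomp := (hf.1 (x + t • v)).hasGradientAt.hasFDerivAt.comp_hasDerivAt t hline
  refine ((hcomp.sub ((hasDerivAt_id t).mul_const ⟪gradient f x, v⟫)).sub
    ((hasDerivAt_pow 2 t).mul_const (L / 2 * ‖v‖ ^ 2))).congr_deriv ?_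
  rw [InnerProductSpace.toDual_apply_apply, inner_sub_left]
  push_cast
  ring

theorem IsSmooth.le_add_inner_add_sq (hf : IsSmooth L f) (x y : E) :
    f y ≤ f x + ⟪gradient f x, y - x⟫ + L / 2 * ‖y - x‖ ^ 2 := by
  set v := y - x with hv
  have hderiv := hf.hasDerivAt_comp_line_sub_quadratic x v
  have hanti : AntitoneOn (fun t : ℝ ↦
      f (x + t • v) - t * ⟪gradient f x, v⟫ - t ^ 2 * (L / 2 * ‖v‖ ^ 2)) (Set.Ici 0) := by
    refine antitoneOn_of_deriv_nonpos (convex_Ici 0)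
      (fun t _ ↦ (hderiv t).continuousAt.continuousWithinAt)
      (fun t _ ↦ (hderiv t).differentiableAt.differentiableWithinAt) fun t ht ↦ ?_
    rw [interior_Ici, Set.mem_Ioi] at ht
    rw [(hderiv t).deriv, sub_nonpos]
    calc ⟪gradient f (x + t • v) - gradient f x, v⟫
        ≤ ‖gradient f (x + t • v) - gradient f x‖ * ‖v‖ := real_inner_le_norm _ _
      _ ≤ L * ‖x + t • v - x‖ * ‖v‖ := by gcongr; exact hf.2 _ _
      _ = t * (L * ‖v‖ ^ 2) := by
        rw [add_sub_cancel_left, norm_smul, Real.norm_of_nonneg ht.le]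
        ring
  have h := hanti (Set.mem_Ici.2 le_rfl) (Set.mem_Ici.2 zero_le_one) zero_le_one
  simp only [one_smul, zero_smul, add_zero, hv, add_sub_cancel] at h
  linarith

theorem IsStronglyConvex.modulus_le [Nontrivial E] (hconv : IsStronglyConvex l f)
    (hsmooth : IsSmooth L f) : l ≤ L := by
  obtain ⟨x, hx⟩ := exists_ne (0 : E)
  have h := (hconv 0 x).trans (hsmooth.le_add_inner_add_sq 0 x)
  rw [sub_zero, add_le_add_iff_left] at h
  linarith [le_of_mul_le_mul_right h (by positivity)]

/-- This is cocoercivity of the gradient of `f - l/2 ‖·‖²`, with constant `L - l`. -/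
theorem IsStronglyConvex.mul_norm_sq_add_norm_gradient_sub_sq_le (hconv : IsStronglyConvex l f)
    (hsmooth : IsSmooth L f) (x y : E) :
    l * L * ‖x - y‖ ^ 2 + ‖gradient f x - gradient f y‖ ^ 2
      ≤ (l + L) * ⟪gradient f x - gradient f y, x - y⟫ := by
  have hshift (x y : E) : ⟪gradient f x - l • x, y - x⟫ - l / 2 * ‖x‖ ^ 2
      = ⟪gradient f x, y - x⟫ + l / 2 * ‖y - x‖ ^ 2 - l / 2 * ‖y‖ ^ 2 := by
    rw [inner_sub_left, real_inner_smul_left, inner_sub_right x, real_inner_self_eq_norm_sq,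
      norm_sub_sq_real, real_inner_comm x y]
    ring
  have hcoco := norm_sub_sq_le_mul_inner_of_quadratic_bounds
    (f := fun x ↦ f x - l / 2 * ‖x‖ ^ 2) (g := fun x ↦ gradient f x - l • x) (c := L - l)
    (fun x y ↦ by linarith [hconv x y, hshift x y])
    (fun x y ↦ by linarith [hsmooth.le_add_inner_add_sq x y, hshift x y]) x y
  rw [sub_sub_sub_comm, ← smul_sub, norm_sub_sq_real, inner_sub_left _ (l • _),
    real_inner_smul_left, real_inner_smul_right, real_inner_self_eq_norm_sq, norm_smul, mul_pow,
    Real.norm_eq_abs, sq_abs] at hcoco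
  linarith

end Moduli

section ContractionRate

variable {l L κ : ℝ}

/-- The linear rate `ρ` of exact FedSplit as a function of the condition number `κ`. -/
noncomputable def fedsplitRate (κ : ℝ) : ℝ := 1 - 2 / (√κ + 1)

theorem fedsplitRate_lt_one (κ : ℝ) : fedsplitRate κ < 1 :=
  sub_lt_self 1 (by positivity)

theorem fedsplitRate_nonneg (hκ : 1 ≤ κ) : 0 ≤ fedsplitRate κ := by
  have : 1 ≤ √κ := Real.one_le_sqrt.2 hκ
  rw [fedsplitRate, sub_nonneg, div_le_one (by positivity)]
  linarith

theorem fedsplitRate_div (hl : 0 < l) (hL : 0 ≤ L) :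
    fedsplitRate (L / l) = (√L - √l) / (√L + √l) := by
  have : 0 < √l := Real.sqrt_pos.2 hl
  rw [fedsplitRate, Real.sqrt_div hL]
  field_simp
  ring

theorem norm_sub_smul_le_fedsplitRate_mul {E : Type*} [NormedAddCommGroup E]
    [InnerProductSpace ℝ E] {a g : E} (hl : 0 < l) (hlL : l ≤ L)
    (h : l * L * ‖a‖ ^ 2 + ‖g‖ ^ 2 ≤ (l + L) * ⟪g, a⟫) :
    ‖a - (1 / √(l * L)) • g‖ ≤ fedsplitRate (L / l) * ‖a + (1 / √(l * L)) • g‖ := by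
  obtain ⟨x, hx, rfl⟩ : ∃ x, 0 < x ∧ x ^ 2 = l := ⟨√l, Real.sqrt_pos.2 hl, Real.sq_sqrt hl.le⟩
  have hL : 0 < L := hl.trans_le hlL
  obtain ⟨y, hy, rfl⟩ : ∃ y, 0 < y ∧ y ^ 2 = L := ⟨√L, Real.sqrt_pos.2 hL, Real.sq_sqrt hL.le⟩
  have hxy : x ≤ y := (sq_le_sq₀ hx.le hy.le).1 hlL
  rw [fedsplitRate_div hl hL.le, Real.sqrt_mul hl.le, Real.sqrt_sq hx.le, Real.sqrt_sq hy.le,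
    div_mul_eq_mul_div, le_div_iff₀ (by positivity)]
  refine (sq_le_sq₀ (by positivity) (mul_nonneg (sub_nonneg.2 hxy) (norm_nonneg _))).1 ?_
  have hgap : ((y - x) * ‖a + (1 / (x * y)) • g‖) ^ 2 - (‖a - (1 / (x * y)) • g‖ * (y + x)) ^ 2
      = 4 / (x * y) * ((x ^ 2 + y ^ 2) * ⟪g, a⟫ - (x ^ 2 * y ^ 2 * ‖a‖ ^ 2 + ‖g‖ ^ 2)) := by
    rw [mul_pow, mul_pow, norm_sub_sq_real, norm_add_sq_real, real_inner_smul_right, norm_smul,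
      mul_pow, Real.norm_eq_abs, sq_abs, real_inner_comm]
    field_simp
    ring
  rw [← sub_nonneg, hgap]
  exact mul_nonneg (by positivity) (sub_nonneg.2 h)

end ContractionRate

section Proximal

variable {E : Type*} [NormedAddCommGroup E] [InnerProductSpace ℝ E] {f : E → ℝ} {s : ℝ} {w p : E}

/-- `p` is a value of the proximal operator `prox_{s f}` at `w`, i.e. a minimizer of its defining
objective; a relation, because existence and uniqueness of the minimizer are separate questions. -/
def IsProx (s : ℝ) (f : E → ℝ) (w p : E) : Prop :=
  ∀ u, f p + (2 * s)⁻¹ * ‖w - p‖ ^ 2 ≤ f u + (2 * s)⁻¹ * ‖w - u‖ ^ 2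

variable [CompleteSpace E]

theorem IsProx.add_smul_gradient (hp : IsProx s f w p) (hs : s ≠ 0) (hf : DifferentiableAt ℝ f p) :
    p + s • gradient f p = w := by
  have hgrad : HasGradientAt (fun u ↦ f u + (2 * s)⁻¹ * ‖w - u‖ ^ 2)
      (gradient f p - s⁻¹ • (w - p)) p := by
    rw [hasGradientAt_iff_hasFDerivAt]
    refine (hf.hasGradientAt.hasFDerivAt.add
      ((((hasFDerivAt_id (𝕜 := ℝ) p).const_sub w).norm_sq).const_mul (2 * s)⁻¹)).congr_fderiv ?_
    ext v
    simp only [toDual_gradient, mul_inv_rev, id_eq, map_sub, ContinuousLinearMap.comp_neg,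
      ContinuousLinearMap.comp_id, neg_sub, add_apply, smul_apply, sub_apply, coe_innerSL_apply,
      nsmul_eq_mul, Nat.cast_ofNat, smul_eq_mul, map_smul, InnerProductSpace.toDual_apply_apply]
    ring
  have hmin : IsLocalMin (fun u ↦ f u + (2 * s)⁻¹ * ‖w - u‖ ^ 2) p := Eventually.of_forall hp
  have hzero : gradient f p - s⁻¹ • (w - p) = 0 :=
    (LinearIsometryEquiv.map_eq_zero_iff _).1 (hmin.hasFDerivAt_eq_zero hgrad.hasFDerivAt)
  rw [sub_eq_zero.1 hzero, smul_inv_smul₀ hs, add_sub_cancel]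

theorem IsProx.norm_reflect_sub_reflect_le {l L : ℝ} {v q : E} (hl : 0 < l) (hlL : l ≤ L)
    (hconv : IsStronglyConvex l f) (hsmooth : IsSmooth L f)
    (hp : IsProx (1 / √(l * L)) f w p) (hq : IsProx (1 / √(l * L)) f v q) :
    ‖((2 : ℝ) • p - w) - ((2 : ℝ) • q - v)‖ ≤ fedsplitRate (L / l) * ‖w - v‖ := by
  have hL : 0 < L := hl.trans_le hlL
  have hs : 1 / √(l * L) ≠ 0 := by positivity
  have hinterp := hconv.mul_norm_sq_add_norm_gradient_sub_sq_le hsmooth p q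
  have hw := hp.add_smul_gradient hs (hsmooth.1 p)
  have hv := hq.add_smul_gradient hs (hsmooth.1 q)
  have hreflect : ((2 : ℝ) • p - w) - ((2 : ℝ) • q - v)
      = (p - q) - (1 / √(l * L)) • (gradient f p - gradient f q) := by
    rw [← hw, ← hv]
    module
  have hsub : w - v = (p - q) + (1 / √(l * L)) • (gradient f p - gradient f q) := by
    rw [← hw, ← hv]
    module
  rw [hreflect, hsub]
  exact norm_sub_smul_le_fedsplitRate_mul hl hlL hinterp

end Proximal

section PerturbedIteration

open Function

theorem dist_isFixedPt_le_of_perturbed_iterates {α : Type*} [PseudoMetricSpace α]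
    {K : NNReal} {T : α → α} {x : α} {z : ℕ → α} {ε : ℕ → ℝ} {n₀ : ℕ} (hT : LipschitzWith K T)
    (hx : IsFixedPt T x) (hz : ∀ n ≥ n₀, dist (z (n + 1)) (T (z n)) ≤ ε n) {n : ℕ} (hn : n₀ ≤ n) :
    dist (z n) x ≤ K ^ (n - n₀) * dist (z n₀) x + ∑ k ∈ Ico n₀ n, K ^ (n - (k + 1)) * ε k := by
  have hstep : ∀ n ≥ n₀, dist (z (n + 1)) x ≤ K * dist (z n) x + ε n := fun n hn ↦ calc
    dist (z (n + 1)) x ≤ dist (z (n + 1)) (T (z n)) + dist (T (z n)) (T x) := by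
      nth_rw 1 [← hx.eq]
      exact dist_triangle _ _ _
    _ ≤ K * dist (z n) x + ε n := by linarith [hz n hn, hT.dist_le_mul (z n) x]
  have hsum := discrete_gronwall_prod_general (u := fun n ↦ dist (z n) x) (c := fun _ ↦ K)
    hstep (fun _ _ ↦ K.2) hn
  simpa only [prod_const, Nat.card_Ico, mul_comm] using hsum

end PerturbedIteration

section Blocks

open scoped ENNReal

variable {ι : Type*} [Fintype ι]

theorem lipschitzWith_toLp_blockwise {p : ℝ≥0∞} [Fact (1 ≤ p)] {α β : ι → Type*}
    [∀ i, PseudoEMetricSpace (α i)] [∀ i, PseudoEMetricSpace (β i)] {K : NNReal}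
    {φ : ∀ i, α i → β i} (hφ : ∀ i, LipschitzWith K (φ i)) :
    LipschitzWith K fun z : PiLp p α ↦ WithLp.toLp p fun i ↦ φ i (z i) := by
  intro z w
  rcases p.dichotomy with rfl | hp
  · rw [PiLp.edist_eq_iSup, PiLp.edist_eq_iSup, ENNReal.mul_iSup]
    exact iSup_mono fun i ↦ hφ i (z i) (w i)
  · have hpos : 0 < p.toReal := one_pos.trans_le hp
    rw [PiLp.edist_eq_sum hpos, PiLp.edist_eq_sum hpos]
    calc (∑ i, edist (φ i (z i)) (φ i (w i)) ^ p.toReal) ^ (1 / p.toReal)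
        ≤ (∑ i, (K * edist (z i) (w i)) ^ p.toReal) ^ (1 / p.toReal) := by
          gcongr with i
          exact hφ i (z i) (w i)
      _ = K * (∑ i, edist (z i) (w i) ^ p.toReal) ^ (1 / p.toReal) := by
          simp_rw [ENNReal.mul_rpow_of_nonneg _ _ hpos.le]
          rw [← mul_sum, ENNReal.mul_rpow_of_nonneg _ _ (by positivity), ← ENNReal.rpow_mul,
            mul_one_div_cancel hpos.ne', ENNReal.rpow_one]

variable {E : Type*} [NormedAddCommGroup E] [InnerProductSpace ℝ E]

/-- The block average `z̄`, i.e. the server variable of FedSplit. -/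
noncomputable def blockAverage (z : PiLp 2 fun _ : ι ↦ E) : E :=
  (Fintype.card ι : ℝ)⁻¹ • ∑ k, z k

theorem blockAverage_fin {m : ℕ} (z : PiLp 2 fun _ : Fin m ↦ E) :
    blockAverage z = (m : ℝ)⁻¹ • ∑ k, z k := by
  rw [blockAverage, Fintype.card_fin]

theorem blockAverage_sub (z w : PiLp 2 fun _ : ι ↦ E) :
    blockAverage (z - w) = blockAverage z - blockAverage w := by
  simp only [blockAverage, PiLp.sub_apply, sum_sub_distrib, smul_sub]

/-- Reflection across the consensus subspace `{z | z₁ = ⋯ = zₘ}`, the reflected resolvent of its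
indicator function. -/
noncomputable def consensusReflection (z : PiLp 2 fun _ : ι ↦ E) : PiLp 2 fun _ : ι ↦ E :=
  WithLp.toLp 2 fun j ↦ (2 : ℝ) • blockAverage z - z j

theorem consensusReflection_sub (z w : PiLp 2 fun _ : ι ↦ E) :
    consensusReflection (z - w) = consensusReflection z - consensusReflection w := by
  ext1 j
  simp only [consensusReflection, blockAverage_sub, PiLp.sub_apply]
  module

theorem norm_consensusReflection [Nonempty ι] (z : PiLp 2 fun _ : ι ↦ E) :
    ‖consensusReflection z‖ = ‖z‖ := by
  have hsum : ∑ k, z k = (Fintype.card ι : ℝ) • blockAverage z := by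
    rw [blockAverage, smul_inv_smul₀ (Nat.cast_ne_zero.2 Fintype.card_ne_zero)]
  have hblock (j : ι) : ‖consensusReflection z j‖ ^ 2
      = 4 * ‖blockAverage z‖ ^ 2 - 4 * ⟪blockAverage z, z j⟫ + ‖z j‖ ^ 2 := by
    rw [consensusReflection, norm_sub_sq_real, norm_smul, real_inner_smul_left, mul_pow,
      Real.norm_ofNat]
    ring
  rw [← sq_eq_sq₀ (norm_nonneg _) (norm_nonneg _), PiLp.norm_sq_eq_of_L2, PiLp.norm_sq_eq_of_L2]
  simp only [hblock]
  rw [sum_add_distrib, sum_sub_distrib, ← mul_sum, ← mul_sum, ← inner_sum, hsum,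
    real_inner_smul_right, real_inner_self_eq_norm_sq, sum_const, card_univ, nsmul_eq_mul]
  ring

theorem isometry_consensusReflection [Nonempty ι] :
    Isometry (consensusReflection : (PiLp 2 fun _ : ι ↦ E) → PiLp 2 fun _ : ι ↦ E) :=
  Isometry.of_dist_eq fun z w ↦ by
    rw [dist_eq_norm, dist_eq_norm, ← consensusReflection_sub, norm_consensusReflection]

end Blocks

section FedSplit

open Function

variable {ι E : Type*} [Fintype ι] [NormedAddCommGroup E] [InnerProductSpace ℝ E]

/-- One round `z^{(t)} ↦ z^{(t+1)}` of FedSplit in which block `j` uses the proximal solver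
`prox j`. -/
noncomputable def fedsplitStep (prox : ι → E → E) (z : PiLp 2 fun _ : ι ↦ E) :
    PiLp 2 fun _ : ι ↦ E :=
  WithLp.toLp 2 fun j ↦
    z j + (2 : ℝ) • (prox j ((2 : ℝ) • blockAverage z - z j) - blockAverage z)

/-- The blockwise error, at the reflected point `2 z̄ - z`, of the solvers `proxU` as approximations
of `prox`. -/
noncomputable def fedsplitResidual (prox proxU : ι → E → E) (z : PiLp 2 fun _ : ι ↦ E) :
    PiLp 2 fun _ : ι ↦ E :=
  WithLp.toLp 2 fun j ↦
    proxU j ((2 : ℝ) • blockAverage z - z j) - prox j ((2 : ℝ) • blockAverage z - z j)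

theorem isFixedPt_fedsplitStep_iff {prox : ι → E → E} {z : PiLp 2 fun _ : ι ↦ E} :
    IsFixedPt (fedsplitStep prox) z ↔
      ∀ j, z j = z j + (2 : ℝ) • (prox j ((2 : ℝ) • blockAverage z - z j) - blockAverage z) :=
  ⟨fun h j ↦ congrArg (fun w : PiLp 2 _ ↦ w j) h.eq.symm, fun h ↦ PiLp.ext fun j ↦ (h j).symm⟩

theorem fedsplitStep_eq_add_two_smul_residual (prox proxU : ι → E → E)
    (z : PiLp 2 fun _ : ι ↦ E) :
    fedsplitStep proxU z = fedsplitStep prox z + (2 : ℝ) • fedsplitResidual prox proxU z := by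
  ext1 j
  simp only [fedsplitStep, fedsplitResidual, PiLp.add_apply, PiLp.smul_apply]
  module

theorem fedsplitStep_eq_reflect_consensusReflection (prox : ι → E → E) (z : PiLp 2 fun _ : ι ↦ E) :
    fedsplitStep prox z = WithLp.toLp 2 fun j ↦
      (2 : ℝ) • prox j (consensusReflection z j) - consensusReflection z j := by
  ext1 j
  simp only [fedsplitStep, consensusReflection]
  module

theorem lipschitzWith_fedsplitStep [Nonempty ι] {K : NNReal} {prox : ι → E → E}
    (hprox : ∀ j, LipschitzWith K fun w ↦ (2 : ℝ) • prox j w - w) :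
    LipschitzWith K (fedsplitStep prox) := by
  have hcomp := (lipschitzWith_toLp_blockwise (p := 2) hprox).comp
    isometry_consensusReflection.lipschitz
  rw [mul_one] at hcomp
  convert! hcomp using 1
  exact funext (fedsplitStep_eq_reflect_consensusReflection prox)

variable [CompleteSpace E] [Nonempty ι] {f : ι → E → ℝ} {l L : ℝ} {prox : ι → E → E}

theorem contractingWith_fedsplitStep (hl : 0 < l) (hlL : l ≤ L)
    (hconv : ∀ j, IsStronglyConvex l (f j)) (hsmooth : ∀ j, IsSmooth L (f j))
    (hprox : ∀ j w, IsProx (1 / √(l * L)) (f j) w (prox j w)) :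
    ContractingWith (fedsplitRate (L / l)).toNNReal (fedsplitStep prox) := by
  refine ⟨Real.toNNReal_lt_one.2 (fedsplitRate_lt_one _),
    lipschitzWith_fedsplitStep fun j ↦ .of_dist_le' fun w v ↦ ?_⟩
  rw [dist_eq_norm, dist_eq_norm]
  exact (hprox j w).norm_reflect_sub_reflect_le hl hlL (hconv j) (hsmooth j) (hprox j v)

theorem fedsplit_convergence_general_residuals_general
    (hl : 0 < l) (hconv : ∀ j, IsStronglyConvex l (f j)) (hsmooth : ∀ j, IsSmooth L (f j))
    (hprox : ∀ j w, IsProx (1 / √(l * L)) (f j) w (prox j w)) {proxU : ℕ → ι → E → E}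
    {z r : ℕ → PiLp 2 fun _ : ι ↦ E} (hz : ∀ t, 1 ≤ t → z (t + 1) = fedsplitStep (proxU t) (z t))
    (hr : ∀ t, 1 ≤ t → r t = fedsplitResidual prox (proxU t) (z t)) :
    ∃ zstar, IsFixedPt (fedsplitStep prox) zstar ∧
      (∀ w, IsFixedPt (fedsplitStep prox) w → w = zstar) ∧
      ∀ t, ‖z (t + 1) - zstar‖ ≤ fedsplitRate (L / l) ^ t * ‖z 1 - zstar‖
        + 2 * ∑ i ∈ Icc 1 t, fedsplitRate (L / l) ^ (t - i) * ‖r i‖ := by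
  rcases subsingleton_or_nontrivial E with hE | hE
  · have : Subsingleton (PiLp 2 fun _ : ι ↦ E) := ⟨fun _ _ ↦ PiLp.ext fun _ ↦ Subsingleton.elim _ _⟩
    refine ⟨0, Subsingleton.elim _ _, fun _ _ ↦ Subsingleton.elim _ _, fun t ↦ ?_⟩
    simp [norm_of_subsingleton]
  obtain ⟨j⟩ := ‹Nonempty ι›
  have hlL : l ≤ L := (hconv j).modulus_le (hsmooth j)
  have hT := contractingWith_fedsplitStep hl hlL hconv hsmooth hprox
  have hfixed := hT.fixedPoint_isFixedPt
  refine ⟨_, hfixed, fun w hw ↦ hT.fixedPoint_unique hw, fun t ↦ ?_⟩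
  have hstep : ∀ t ≥ 1, dist (z (t + 1)) (fedsplitStep prox (z t)) ≤ 2 * ‖r t‖ := fun t ht ↦ by
    rw [hz t ht, fedsplitStep_eq_add_two_smul_residual prox, ← hr t ht, dist_self_add_left,
      norm_smul, Real.norm_ofNat]
  have hbound := dist_isFixedPt_le_of_perturbed_iterates hT.toLipschitzWith hfixed hstep
    (Nat.le_add_left 1 t)
  simpa only [Real.coe_toNNReal _ (fedsplitRate_nonneg ((one_le_div hl).2 hlL)), dist_eq_norm,
    Nat.add_sub_cancel, Nat.add_sub_add_right, Ico_add_one_right_eq_Icc, mul_left_comm _ (2 : ℝ),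
    ← mul_sum] using hbound

end FedSplit

/-- FedSplit convergence with general per-round residuals (Theorem 3 of Pathak–Wainwright):
with `l* = min_j l_j`, `L* = max_j L_j`, `κ = L*/l*` and stepsize `s = 1/√(l* L*)`, the exact
FedSplit iteration has a unique fixed point `z*`, and the inexact iterates satisfy
`‖z^{(t+1)} - z*‖ ≤ ρ^t ‖z^{(1)} - z*‖ + 2 ∑_{j=1}^t ρ^{t-j} ‖r^{(j)}‖` for `t ≥ 1`,
where `ρ = 1 - 2/(√κ+1)` and `r^{(t)}` is the blockwise proximal-evaluation residual. -/
theorem fedsplit_convergence_general_residuals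
    {d m : ℕ} (hm : 0 < m)
    (f : Fin m → EuclideanSpace ℝ (Fin d) → ℝ)
    (hdiff : ∀ j, Differentiable ℝ (f j))
    (l L : Fin m → ℝ) (hl : ∀ j, 0 < l j)
    (hstrong : ∀ j x y, f j y ≥ f j x + ⟪gradient (f j) x, y - x⟫ + l j / 2 * ‖y - x‖ ^ 2)
    (hsmooth : ∀ j x y, ‖gradient (f j) x - gradient (f j) y‖ ≤ L j * ‖x - y‖)
    (lstar Lstar : ℝ)
    (hlstar : IsLeast (Set.range l) lstar)
    (hLstar : IsGreatest (Set.range L) Lstar)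
    (kappa : ℝ) (hkappa : kappa = Lstar / lstar)
    (rho : ℝ) (hrho : rho = 1 - 2 / (Real.sqrt kappa + 1))
    (s : ℝ) (hs : s = 1 / Real.sqrt (lstar * Lstar))
    (prox : Fin m → EuclideanSpace ℝ (Fin d) → EuclideanSpace ℝ (Fin d))
    (hprox : ∀ j w u, f j (prox j w) + (2 * s)⁻¹ * ‖w - prox j w‖ ^ 2
        ≤ f j u + (2 * s)⁻¹ * ‖w - u‖ ^ 2)
    (proxU : Fin m → EuclideanSpace ℝ (Fin d) → EuclideanSpace ℝ (Fin d))
    -- FedSplit iterates with approximate proximal solvers, indexed from t = 1;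
    -- the server variable equals the block average x^{(t)} = z̄^{(t)}
    (z : ℕ → PiLp 2 (fun _ : Fin m => EuclideanSpace ℝ (Fin d)))
    (hupdate : ∀ t, 1 ≤ t → ∀ j,
      z (t + 1) j = z t j + (2 : ℝ) •
        (proxU j ((2 : ℝ) • ((m : ℝ)⁻¹ • ∑ k, z t k) - z t j)
          - (m : ℝ)⁻¹ • ∑ k, z t k))
    -- the per-round residuals
    (r : ℕ → PiLp 2 (fun _ : Fin m => EuclideanSpace ℝ (Fin d)))
    (hr : ∀ t, 1 ≤ t → ∀ j,
      r t j = proxU j ((2 : ℝ) • ((m : ℝ)⁻¹ • ∑ k, z t k) - z t j)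
        - prox j ((2 : ℝ) • ((m : ℝ)⁻¹ • ∑ k, z t k) - z t j)) :
    ∃ zstar : PiLp 2 (fun _ : Fin m => EuclideanSpace ℝ (Fin d)),
      (∀ j, zstar j = zstar j + (2 : ℝ) •
        (prox j ((2 : ℝ) • ((m : ℝ)⁻¹ • ∑ k, zstar k) - zstar j)
          - (m : ℝ)⁻¹ • ∑ k, zstar k)) ∧
      (∀ w : PiLp 2 (fun _ : Fin m => EuclideanSpace ℝ (Fin d)),
        (∀ j, w j = w j + (2 : ℝ) •
          (prox j ((2 : ℝ) • ((m : ℝ)⁻¹ • ∑ k, w k) - w j)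
            - (m : ℝ)⁻¹ • ∑ k, w k)) → w = zstar) ∧
      (∀ t : ℕ, 1 ≤ t →
        ‖z (t + 1) - zstar‖
          ≤ rho ^ t * ‖z 1 - zstar‖ + 2 * ∑ i ∈ Finset.Icc 1 t, rho ^ (t - i) * ‖r i‖) := by
  subst hkappa hrho hs
  obtain ⟨⟨j₀, hj₀⟩, hlmin⟩ := hlstar
  have : Nonempty (Fin m) := ⟨j₀⟩
  simp only [← blockAverage_fin, ← isFixedPt_fedsplitStep_iff] at hupdate hr ⊢
  obtain ⟨zstar, hfixed, hunique, hbound⟩ := fedsplit_convergence_general_residuals_general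
    (hj₀ ▸ hl j₀) (fun j ↦ IsStronglyConvex.mono (hlmin ⟨j, rfl⟩) (hstrong j))
    (fun j ↦ IsSmooth.mono (hLstar.2 ⟨j, rfl⟩) ⟨hdiff j, hsmooth j⟩) hprox (proxU := fun _ ↦ proxU)
    (fun t ht ↦ PiLp.ext (hupdate t ht)) (fun t ht ↦ PiLp.ext (hr t ht))
  exact ⟨zstar, hfixed, hunique, fun t _ ↦ hbound t⟩
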